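/- Let c > 0 be a real number and n a positive integer with (2/π)·c ≤ n < (2/π + 1/25)·c. Then ν(n,c) ≥ 1/10, where ν(n,c) = √π · cⁿ · (n!)² / ( (2n)! · Γ(n + 3/2) ) and Γ denotes the gamma function. -/

import Mathlib

open Real

/-!
Legendre's duplication formula and the factorial formula for the Wallis product `W n` give
`ν(n, c) = 2 * W n * (c / 4) ^ n / n!`, where `W n ≥ 9 / 8` for `n ≥ 1`. Since `2 / π + 1 / 25` is
slightly less than `e / 4`, the number `c / 4` exceeds `n / e` by a factor of at least
`t = 1 + 1 / 250`, so by Stirling's upper bound `n! ≤ e * √n * (n / e) ^ n` the quotient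
`(c / 4) ^ n / n!` is at least `t ^ n / (e * √n)`. By Bernoulli's inequality and AM-GM the
exponential gain `t ^ n` makes up for the loss of `√n`.
-/

/-- The quantity `ν(n, c)` that the theorem bounds from below, with its parameters extended to
`n = 0` and to arbitrary real `c` (`c ^ 0 = 1` also for `c = 0`). -/
noncomputable def nu (n : ℕ) (c : ℝ) : ℝ :=
  √π * c ^ n * (n.factorial : ℝ) ^ 2 / (((2 * n).factorial : ℝ) * Gamma ((n : ℝ) + 3 / 2))

lemma factorial_mul_Gamma_add_three_halves (n : ℕ) :
    (n.factorial : ℝ) * Gamma ((n : ℝ) + 3 / 2) =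
      ((2 * n + 1).factorial : ℝ) * √π / 2 ^ (2 * n + 1) := by
  have duplication := Gamma_mul_Gamma_add_half ((n : ℝ) + 1)
  have arg_half : (n : ℝ) + 1 + 1 / 2 = n + 3 / 2 := by ring
  have arg_double : 2 * ((n : ℝ) + 1) = ((2 * n + 1 : ℕ) : ℝ) + 1 := by push_cast; ring
  have exponent : 1 - (((2 * n + 1 : ℕ) : ℝ) + 1) = -((2 * n + 1 : ℕ) : ℝ) := by ring
  rw [arg_half, arg_double, exponent, Gamma_nat_eq_factorial, Gamma_nat_eq_factorial,
    rpow_neg zero_le_two, rpow_natCast] at duplication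
  rw [duplication]
  ring

lemma nu_eq_wallis (n : ℕ) (c : ℝ) :
    nu n c = 2 * Wallis.W n * (c / 4) ^ n / n.factorial := by
  have factorial_pos : (0 : ℝ) < n.factorial := by positivity
  have Gamma_eq : Gamma ((n : ℝ) + 3 / 2) =
      ((2 * n + 1).factorial : ℝ) * √π / 2 ^ (2 * n + 1) / n.factorial := by
    rw [eq_div_iff factorial_pos.ne', mul_comm, factorial_mul_Gamma_add_three_halves]
  have sixteen_pow : (2 : ℝ) ^ (4 * n) = 4 ^ n * 4 ^ n := by
    rw [pow_mul, ← mul_pow]; norm_num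
  have two_pow : (2 : ℝ) ^ (2 * n + 1) = 2 * 4 ^ n := by
    rw [pow_succ, pow_mul]; norm_num [mul_comm]
  rw [nu, Gamma_eq, Wallis.W_eq_factorial_ratio, Nat.factorial_succ, sixteen_pow, two_pow, div_pow]
  push_cast
  field_simp

lemma nine_eighths_le_wallis {n : ℕ} (hn : n ≠ 0) : 9 / 8 ≤ Wallis.W n := by
  have one_le : (1 : ℝ) ≤ n := by exact_mod_cast Nat.one_le_iff_ne_zero.mpr hn
  have ratio_ge : (3 : ℝ) / 4 ≤ (2 * n + 1) / (2 * n + 2) := by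
    rw [div_le_div_iff₀ (by norm_num) (by positivity)]
    linarith
  calc (9 / 8 : ℝ) = 3 / 4 * (3 / 2) := by norm_num
    _ ≤ (2 * n + 1) / (2 * n + 2) * (π / 2) := by gcongr; exact pi_gt_three.le
    _ ≤ Wallis.W n := Wallis.le_W n

lemma factorial_le_exp_one_mul_sqrt_mul_pow {n : ℕ} (hn : n ≠ 0) :
    (n.factorial : ℝ) ≤ exp 1 * √n * (n / exp 1) ^ n := by
  obtain ⟨m, rfl⟩ := Nat.exists_eq_succ_of_ne_zero hn
  have seq_le : Stirling.stirlingSeq (m + 1) ≤ exp 1 / √2 :=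
    (Stirling.stirlingSeq'_antitone m.zero_le).trans_eq Stirling.stirlingSeq_one
  rw [Stirling.stirlingSeq, div_le_iff₀ (by positivity), sqrt_mul zero_le_two] at seq_le
  refine seq_le.trans_eq ?_
  field_simp

lemma sqrt_le_one_add_pow_div {a : ℝ} (ha : 0 < a) (n : ℕ) :
    √n ≤ (1 + a) ^ n / (2 * √a) := by
  have am_gm : 2 * √a * √n ≤ 1 + n * a := by
    have h := two_mul_le_add_sq 1 (√a * √n)
    rw [mul_pow, sq_sqrt ha.le, sq_sqrt n.cast_nonneg] at h
    linarith
  have bernoulli : 1 + n * a ≤ (1 + a) ^ n := one_add_mul_le_pow (by linarith) n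
  rw [le_div_iff₀' (by positivity)]
  exact am_gm.trans bernoulli

lemma factorial_le_mul_one_add_mul_pow {a : ℝ} (ha : 0 < a) {n : ℕ} (hn : n ≠ 0) :
    (n.factorial : ℝ) ≤ exp 1 / (2 * √a) * ((1 + a) * (n / exp 1)) ^ n :=
  calc (n.factorial : ℝ) ≤ exp 1 * √n * (n / exp 1) ^ n :=
        factorial_le_exp_one_mul_sqrt_mul_pow hn
    _ ≤ exp 1 * ((1 + a) ^ n / (2 * √a)) * (n / exp 1) ^ n := by
        gcongr
        exact sqrt_le_one_add_pow_div ha n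
    _ = exp 1 / (2 * √a) * ((1 + a) * (n / exp 1)) ^ n := by
        rw [mul_pow]
        ring

lemma exp_one_div_two_mul_sqrt_le : exp 1 / (2 * √(1 / 250)) ≤ 45 / 2 := by
  have sqrt_ge : (0.063 : ℝ) ≤ √(1 / 250) := le_sqrt_of_sq_le (by norm_num)
  rw [div_le_iff₀ (by positivity)]
  linarith [exp_one_lt_d9]

lemma one_add_mul_two_div_pi_add_le : (1 + 1 / 250) * (2 / π + 1 / 25) ≤ exp 1 / 4 := by
  have two_div_pi_lt : 2 / π < 2 / 3.1415 := by gcongr; exact pi_gt_d4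
  norm_num at two_div_pi_lt
  linarith [exp_one_gt_d9]

lemma factorial_le_mul_div_four_pow {c : ℝ} {n : ℕ} (hn : n ≠ 0)
    (h : (n : ℝ) ≤ (2 / π + 1 / 25) * c) : (n.factorial : ℝ) ≤ 45 / 2 * (c / 4) ^ n := by
  have hc : 0 ≤ c := nonneg_of_mul_nonneg_right (n.cast_nonneg.trans h) (by positivity)
  have base_le : (1 + 1 / 250) * (n / exp 1) ≤ c / 4 :=
    calc (1 + 1 / 250) * (n / exp 1) ≤ (1 + 1 / 250) * ((2 / π + 1 / 25) * c / exp 1) := by gcongr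
      _ = (1 + 1 / 250) * (2 / π + 1 / 25) * (c / exp 1) := by ring
      _ ≤ exp 1 / 4 * (c / exp 1) := by gcongr; exact one_add_mul_two_div_pi_add_le
      _ = c / 4 := by field_simp
  calc (n.factorial : ℝ)
      ≤ exp 1 / (2 * √(1 / 250)) * ((1 + 1 / 250) * (n / exp 1)) ^ n :=
        factorial_le_mul_one_add_mul_pow (by norm_num) hn
    _ ≤ 45 / 2 * (c / 4) ^ n :=
        mul_le_mul exp_one_div_two_mul_sqrt_le (pow_le_pow_left₀ (by positivity) base_le n)
          (by positivity) (by norm_num)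

theorem stmt4_general (c : ℝ) (n : ℕ) (h : (n : ℝ) ≤ (2 / π + 1 / 25) * c) :
    1 / 10 ≤ nu n c := by
  rw [nu_eq_wallis]
  rcases eq_or_ne n 0 with rfl | hn
  · norm_num [Wallis.W]
  have hc : 0 ≤ c := nonneg_of_mul_nonneg_right (n.cast_nonneg.trans h) (by positivity)
  rw [le_div_iff₀ (by positivity)]
  calc 1 / 10 * (n.factorial : ℝ) ≤ 1 / 10 * (45 / 2 * (c / 4) ^ n) := by
        gcongr
        exact factorial_le_mul_div_four_pow hn h
    _ = 2 * (9 / 8) * (c / 4) ^ n := by ring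
    _ ≤ 2 * Wallis.W n * (c / 4) ^ n := by
        gcongr
        exact nine_eighths_le_wallis hn

theorem stmt4 (c : ℝ) (hc : 0 < c) (n : ℕ) (hn : 0 < n)
    (h1 : 2 / π * c ≤ (n : ℝ)) (h2 : (n : ℝ) < (2 / π + 1 / 25) * c) :
    Real.sqrt π * c ^ n * (n.factorial : ℝ) ^ 2 /
        (((2 * n).factorial : ℝ) * Real.Gamma ((n : ℝ) + 3 / 2)) ≥ 1 / 10 :=
  stmt4_general c n h2.le
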